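/- arXiv:1105.4489 — 2 statements merged into one kernel-verified Lean document; each statement's English description precedes it below -/
import Mathlib

section
/- Let μ be the Lie algebra law of g_{2.2}, let X = diag(1,−1,0,−1,0,1,0) and g_t = exp(tX) ∈ GL_7(ℝ). Then as t → ∞ the laws g_t·μ converge (coefficientwise on the canonical basis) to the law μ̃₀ with nonzero brackets [e_1,e_2]=e_5, [e_1,e_3]=e_6, [e_1,e_4]=2e_7, [e_2,e_3]=e_4, [e_2,e_6]=e_7, [e_3,e_5]=−e_7; that is, μ degenerates nontrivially to μ̃₀ under the one-parameter subgroup exp(tX). -/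
open Matrix BigOperators Polynomial

noncomputable section

abbrev Law (n : ℕ) := (Fin n → ℝ) → (Fin n → ℝ) → (Fin n → ℝ)

/-- `i`-th canonical basis vector of `ℝ^n`. -/
def bVec {n : ℕ} (i : Fin n) : Fin n → ℝ := Pi.single i 1

def IsBilin {n : ℕ} (μ : Law n) : Prop :=
  (∀ X, IsLinearMap ℝ (μ X)) ∧ (∀ Y, IsLinearMap ℝ (fun X => μ X Y))

def IsSkew {n : ℕ} (μ : Law n) : Prop := ∀ X Y, μ X Y = - μ Y X

def IsJacobi {n : ℕ} (μ : Law n) : Prop :=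
  ∀ X Y Z, μ (μ X Y) Z + μ (μ Y Z) X + μ (μ Z X) Y = 0

def IsLieLaw {n : ℕ} (μ : Law n) : Prop := IsBilin μ ∧ IsSkew μ ∧ IsJacobi μ

/-- lower central series of the law `μ`. -/
def lcs {n : ℕ} (μ : Law n) : ℕ → Submodule ℝ (Fin n → ℝ)
  | 0 => ⊤
  | k + 1 => Submodule.span ℝ {z | ∃ x y, y ∈ lcs μ k ∧ z = μ x y}

def IsNilpotentLaw {n : ℕ} (μ : Law n) : Prop :=
  IsLieLaw μ ∧ ∃ k, lcs μ k = ⊥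

/-- the action of `GL_n(ℝ)` on laws: `(g·μ)(X,Y) = g μ(g⁻¹X, g⁻¹Y)`. -/
def act {n : ℕ} (g : GL (Fin n) ℝ) (μ : Law n) : Law n :=
  fun X Y =>
    (g : Matrix (Fin n) (Fin n) ℝ).mulVec
      (μ (((g⁻¹ : GL (Fin n) ℝ) : Matrix (Fin n) (Fin n) ℝ).mulVec X)
         (((g⁻¹ : GL (Fin n) ℝ) : Matrix (Fin n) (Fin n) ℝ).mulVec Y))

def IsDerivation {n : ℕ} (μ : Law n) (ψ : Matrix (Fin n) (Fin n) ℝ) : Prop :=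
  ∀ X Y, ψ.mulVec (μ X Y) = μ (ψ.mulVec X) Y + μ X (ψ.mulVec Y)

/-- the unnormalized moment map `m(μ) = 4 Ric_μ`, as a matrix in the canonical basis. -/
def momentMap {n : ℕ} (μ : Law n) : Matrix (Fin n) (Fin n) ℝ :=
  Matrix.of fun k l =>
    4 * (-(1/2) * ∑ i, ∑ j, μ (bVec k) (bVec i) j * μ (bVec l) (bVec i) j
      + (1/4) * ∑ i, ∑ j, μ (bVec i) (bVec j) k * μ (bVec i) (bVec j) l)

def IsEinsteinNilradical {n : ℕ} (μ : Law n) : Prop :=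
  ∃ g : GL (Fin n) ℝ, ∃ c : ℝ, ∃ φ : Matrix (Fin n) (Fin n) ℝ,
    c < 0 ∧ φ.IsSymm ∧ IsDerivation (act g μ) φ ∧
    momentMap (act g μ) = c • (1 : Matrix (Fin n) (Fin n) ℝ) + φ

/-- build a (bilinear) law from a table `c` of structure constants on the
canonical basis, antisymmetrized: `[e_i, e_j] = c i j - c j i`. -/
def mkLaw {n : ℕ} (c : Fin n → Fin n → Fin n → ℝ) : Law n :=
  fun X Y k => ∑ i, ∑ j, X i * Y j * (c i j k - c j i k)

/-- structure constants of `g_{2.2}`. -/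
def c22 : Fin 7 → Fin 7 → Fin 7 → ℝ := fun i j =>
  if i = 0 ∧ j = 1 then Pi.single 4 1
  else if i = 0 ∧ j = 2 then Pi.single 5 1
  else if i = 0 ∧ j = 3 then Pi.single 6 2
  else if i = 1 ∧ j = 2 then Pi.single 3 1
  else if i = 1 ∧ j = 5 then Pi.single 6 1
  else if i = 2 ∧ j = 4 then Pi.single 6 (-1)
  else if i = 2 ∧ j = 5 then Pi.single 6 1
  else 0

/-- the Lie algebra law of `g_{2.2}`. -/
def law22 : Law 7 := mkLaw c22

/-- structure constants of the degeneration `μ̃₀` of `g_{2.2}`. -/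
def c22t : Fin 7 → Fin 7 → Fin 7 → ℝ := fun i j =>
  if i = 0 ∧ j = 1 then Pi.single 4 1
  else if i = 0 ∧ j = 2 then Pi.single 5 1
  else if i = 0 ∧ j = 3 then Pi.single 6 2
  else if i = 1 ∧ j = 2 then Pi.single 3 1
  else if i = 1 ∧ j = 5 then Pi.single 6 1
  else if i = 2 ∧ j = 4 then Pi.single 6 (-1)
  else 0

/-- the law `μ̃₀`. -/
def law22t : Law 7 := mkLaw c22t

lemma law22_eq (X Y : Fin 7 → ℝ) : law22 X Y =
    ![0, 0, 0, X 1 * Y 2 - X 2 * Y 1, X 0 * Y 1 - X 1 * Y 0, X 0 * Y 2 - X 2 * Y 0,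
      2 * (X 0 * Y 3 - X 3 * Y 0) + (X 1 * Y 5 - X 5 * Y 1) - (X 2 * Y 4 - X 4 * Y 2)
        + (X 2 * Y 5 - X 5 * Y 2)] := by
  funext k
  fin_cases k <;> simp [law22, mkLaw, c22, Fin.sum_univ_seven] <;> ring

lemma law22t_eq (X Y : Fin 7 → ℝ) : law22t X Y =
    ![0, 0, 0, X 1 * Y 2 - X 2 * Y 1, X 0 * Y 1 - X 1 * Y 0, X 0 * Y 2 - X 2 * Y 0,
      2 * (X 0 * Y 3 - X 3 * Y 0) + (X 1 * Y 5 - X 5 * Y 1) - (X 2 * Y 4 - X 4 * Y 2)] := by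
  funext k
  fin_cases k <;> simp [law22t, mkLaw, c22t, Fin.sum_univ_seven] <;> ring

lemma exp_diag (t : ℝ) : NormedSpace.exp
      (t • Matrix.diagonal (![1, -1, 0, -1, 0, 1, 0] : Fin 7 → ℝ)) =
    Matrix.diagonal (![Real.exp t, Real.exp (-t), 1, Real.exp (-t), 1, Real.exp t, 1]) := by
  rw [← Matrix.diagonal_smul, Matrix.exp_diagonal]
  congr 1
  funext k
  rw [Pi.coe_exp, ← Real.exp_eq_exp_ℝ]
  fin_cases k <;> simp

lemma exp_diag_inv (t : ℝ) : (NormedSpace.exp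
      (t • Matrix.diagonal (![1, -1, 0, -1, 0, 1, 0] : Fin 7 → ℝ)))⁻¹ =
    Matrix.diagonal (![Real.exp (-t), Real.exp t, 1, Real.exp t, 1, Real.exp (-t), 1]) := by
  rw [← Matrix.exp_neg, ← neg_smul, exp_diag, neg_neg]

lemma flow_eq (t : ℝ) (X Y : Fin 7 → ℝ) (k : Fin 7) :
    ((NormedSpace.exp
        (t • Matrix.diagonal (![1, -1, 0, -1, 0, 1, 0] : Fin 7 → ℝ))).mulVec
      (law22
        ((NormedSpace.exp
            (t • Matrix.diagonal (![1, -1, 0, -1, 0, 1, 0] : Fin 7 → ℝ)))⁻¹.mulVec X)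
        ((NormedSpace.exp
            (t • Matrix.diagonal (![1, -1, 0, -1, 0, 1, 0] : Fin 7 → ℝ)))⁻¹.mulVec Y))) k
      = law22t X Y k + Real.exp (-t) * (law22 X Y k - law22t X Y k) := by
  rw [exp_diag_inv, exp_diag, Matrix.mulVec_diagonal]
  have h : Real.exp t * Real.exp (-t) = 1 := by rw [← Real.exp_add]; simp
  generalize Real.exp t = a at *
  generalize Real.exp (-t) = b at *
  rw [law22_eq, law22_eq, law22t_eq]
  fin_cases k <;> simp [Matrix.mulVec_diagonal]
  · linear_combination (X 1 * Y 2 - X 2 * Y 1) * h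
  · linear_combination (X 0 * Y 1 - X 1 * Y 0) * h
  · linear_combination (X 0 * Y 2 - X 2 * Y 0) * h
  · linear_combination (2 * (X 0 * Y 3 - X 3 * Y 0) + (X 1 * Y 5 - X 5 * Y 1)) * h

/-- The limit law satisfies `ad(e_i)^2 = 0` for the three generators. -/
lemma law22t_ad_sq (w : Fin 7 → ℝ) (i : Fin 7) (hi : i = 0 ∨ i = 1 ∨ i = 2) :
    law22t (bVec i) (law22t (bVec i) w) = 0 := by
  rcases hi with rfl | rfl | rfl <;> rw [law22t_eq, law22t_eq] <;> funext k <;>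
    fin_cases k <;> simp [bVec, Fin.ext_iff]

/-- In `g_{2.2}`, `ad(v)^2 e_1 = 0` forces the third coordinate of `v` to vanish. -/
lemma law22_ad_sq (v : Fin 7 → ℝ) (h : law22 v (law22 v (bVec 0)) = 0) : v 2 = 0 := by
  have h6 := congrFun h 6
  rw [law22_eq, law22_eq] at h6
  simp [bVec, Fin.ext_iff] at h6
  have : v 2 * v 2 = 0 := by linarith
  simpa using this

lemma law22_not_iso (g : GL (Fin 7) ℝ) : act g law22 ≠ law22t := by
  intro hg
  set h : Matrix (Fin 7) (Fin 7) ℝ := ((g⁻¹ : GL (Fin 7) ℝ) : Matrix (Fin 7) (Fin 7) ℝ) with hh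
  set G : Matrix (Fin 7) (Fin 7) ℝ := (g : Matrix (Fin 7) (Fin 7) ℝ) with hG
  have hhG : h * G = 1 := by rw [hh, hG, ← Units.val_mul]; simp
  have key : ∀ X Y, law22 (h.mulVec X) (h.mulVec Y) = h.mulVec (law22t X Y) := by
    intro X Y
    rw [← hg]
    simp only [act, Matrix.mulVec_mulVec]
    rw [← hh, ← hG, hhG, Matrix.one_mulVec]
  have hgen : ∀ i : Fin 7, (i = 0 ∨ i = 1 ∨ i = 2) → h.mulVec (bVec i) 2 = 0 := by
    intro i hi
    apply law22_ad_sq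
    have e : bVec 0 = h.mulVec (G.mulVec (bVec 0)) := by
      rw [Matrix.mulVec_mulVec, hhG, Matrix.one_mulVec]
    rw [e, key, key, law22t_ad_sq _ i hi, Matrix.mulVec_zero]
  have hder : ∀ X Y, h.mulVec (law22t X Y) 2 = 0 := by
    intro X Y
    rw [← key, law22_eq]
    rfl
  have b3 : bVec 3 = law22t (bVec 1) (bVec 2) := by
    rw [law22t_eq]; funext k; fin_cases k <;> simp [bVec, Fin.ext_iff]
  have b4 : bVec 4 = law22t (bVec 0) (bVec 1) := by
    rw [law22t_eq]; funext k; fin_cases k <;> simp [bVec, Fin.ext_iff]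
  have b5 : bVec 5 = law22t (bVec 0) (bVec 2) := by
    rw [law22t_eq]; funext k; fin_cases k <;> simp [bVec, Fin.ext_iff]
  have b6 : bVec 6 = law22t (bVec 1) (bVec 5) := by
    rw [law22t_eq]; funext k; fin_cases k <;> simp [bVec, Fin.ext_iff]
  have hall : ∀ i : Fin 7, h.mulVec (bVec i) 2 = 0 := by
    intro i
    fin_cases i
    · exact hgen 0 (by simp)
    · exact hgen 1 (by simp)
    · exact hgen 2 (by simp)
    · exact b3 ▸ hder _ _
    · exact b4 ▸ hder _ _
    · exact b5 ▸ hder _ _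
    · exact b6 ▸ hder _ _
  have hrow : ∀ i : Fin 7, h 2 i = 0 := by
    intro i
    have := hall i
    simpa [bVec] using this
  have h22 := congrFun (congrFun hhG 2) 2
  rw [Matrix.mul_apply] at h22
  simp [hrow] at h22

/-- under the one-parameter group `exp(tX)` with
`X = diag(1,−1,0,−1,0,1,0)`, the law of `g_{2.2}` degenerates nontrivially to
`μ̃₀` as `t → ∞` (coefficientwise on the canonical basis). -/
theorem stmt_10 :
    (∀ i j k : Fin 7,
      Filter.Tendsto
        (fun t : ℝ =>
          ((NormedSpace.exp
              (t • Matrix.diagonal (![1, -1, 0, -1, 0, 1, 0] : Fin 7 → ℝ))).mulVec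
            (law22
              ((NormedSpace.exp
                  (t • Matrix.diagonal (![1, -1, 0, -1, 0, 1, 0] : Fin 7 → ℝ)))⁻¹.mulVec
                (bVec i))
              ((NormedSpace.exp
                  (t • Matrix.diagonal (![1, -1, 0, -1, 0, 1, 0] : Fin 7 → ℝ)))⁻¹.mulVec
                (bVec j)))) k)
        Filter.atTop (nhds (law22t (bVec i) (bVec j) k))) ∧
    ¬ ∃ g : GL (Fin 7) ℝ, act g law22 = law22t := by
  refine ⟨fun i j k => ?_, fun ⟨g, hg⟩ => law22_not_iso g hg⟩
  simp only [flow_eq]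
  have h0 : Filter.Tendsto (fun t : ℝ => Real.exp (-t)) Filter.atTop (nhds 0) :=
    Real.tendsto_exp_neg_atTop_nhds_zero
  have h1 := (h0.mul_const (law22 (bVec i) (bVec j) k - law22t (bVec i) (bVec j) k)).const_add
    (law22t (bVec i) (bVec j) k)
  simpa using h1
end
end

section
/- The 6-dimensional real nilpotent Lie algebra L_{6,11} does not admit a nice basis: for every basis {X_1,...,X_6} of L_{6,11}, writing [X_i,X_j] = Σ_k c_ij^k X_k, either there exist i, j with more than one index k such that c_ij^k ≠ 0, or there exist i, k with more than one index j such that c_ij^k ≠ 0. -/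
open Matrix BigOperators Polynomial

noncomputable section

/-- structure constants of `L_{6,11}`. -/
def c611 : Fin 6 → Fin 6 → Fin 6 → ℝ := fun i j =>
  if i = 0 ∧ j = 1 then Pi.single 2 1
  else if i = 0 ∧ j = 2 then Pi.single 3 1
  else if i = 0 ∧ j = 3 then Pi.single 5 1
  else if i = 1 ∧ j = 2 then Pi.single 5 1
  else if i = 1 ∧ j = 4 then Pi.single 5 1
  else 0

/-- the Lie algebra law of `L_{6,11}`. -/
def law611 : Law 6 := mkLaw c611


theorem law611_eq (X Y : Fin 6 → ℝ) : law611 X Y =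
    ![0, 0, X 0 * Y 1 - X 1 * Y 0, X 0 * Y 2 - X 2 * Y 0, 0,
      X 0 * Y 3 - X 3 * Y 0 + (X 1 * Y 2 - X 2 * Y 1) + (X 1 * Y 4 - X 4 * Y 1)] := by
  ext k
  fin_cases k <;> simp [law611, mkLaw, c611, Fin.sum_univ_six, Pi.single_apply] <;> ring

/-- the law as a bilinear map -/
def bil611 : (Fin 6 → ℝ) →ₗ[ℝ] (Fin 6 → ℝ) →ₗ[ℝ] (Fin 6 → ℝ) :=
  LinearMap.mk₂ ℝ law611
    (by intro x y z; ext k; fin_cases k <;> simp [law611_eq] <;> ring)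
    (by intro c x y; ext k; fin_cases k <;> simp [law611_eq] <;> ring)
    (by intro x y z; ext k; fin_cases k <;> simp [law611_eq] <;> ring)
    (by intro c x y; ext k; fin_cases k <;> simp [law611_eq] <;> ring)

theorem bil611_apply (x y : Fin 6 → ℝ) : bil611 x y = law611 x y := rfl

theorem exists_basis_ne (b : Module.Basis (Fin 6) ℝ (Fin 6 → ℝ))
    (φ : (Fin 6 → ℝ) →ₗ[ℝ] ℝ) (v : Fin 6 → ℝ) (h : φ v ≠ 0) : ∃ i, φ (b i) ≠ 0 := by
  by_contra! hc
  apply h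
  have : φ = 0 := b.ext (by simpa using hc)
  simp [this]

theorem nice_false (b : Module.Basis (Fin 6) ℝ (Fin 6 → ℝ))
    (N1 : ∀ i j k l, b.repr (law611 (b i) (b j)) k ≠ 0 →
      b.repr (law611 (b i) (b j)) l ≠ 0 → k = l)
    (N2 : ∀ i k j l, b.repr (law611 (b i) (b j)) k ≠ 0 →
      b.repr (law611 (b i) (b l)) k ≠ 0 → j = l) : False := by
  have skew : ∀ x y, law611 x y = - law611 y x := by
    intro x y; ext k; fin_cases k <;> simp [law611_eq] <;> ring
  -- a nonzero bracket is a nonzero multiple of a basis vector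
  have mul : ∀ i j, law611 (b i) (b j) ≠ 0 →
      ∃ k, ∃ c : ℝ, c ≠ 0 ∧ law611 (b i) (b j) = c • b k := by
    intro i j h
    have : ∃ k, b.repr (law611 (b i) (b j)) k ≠ 0 := by
      by_contra! hc
      apply h
      apply b.repr.injective
      ext k
      simpa using hc k
    obtain ⟨k, hk⟩ := this
    refine ⟨k, _, hk, ?_⟩
    conv_lhs => rw [← b.sum_repr (law611 (b i) (b j))]
    apply Finset.sum_eq_single k
    · intro l _ hl
      by_cases h0 : b.repr (law611 (b i) (b j)) l = 0
      · simp [h0]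
      · exact absurd (N1 i j l k h0 hk) hl
    · simp
  -- step A
  obtain ⟨j1, hj1⟩ := exists_basis_ne b ((LinearMap.proj 2).comp (bil611 (Pi.single 0 1)))
    (Pi.single 1 1) (by simp [bil611_apply, law611_eq])
  obtain ⟨i1, hi1⟩ := exists_basis_ne b ((LinearMap.proj 2).comp (bil611.flip (b j1)))
    (Pi.single 0 1) (by simpa using hj1)
  obtain ⟨k3, c3, hc3, h3⟩ := mul i1 j1 (by
    intro h; apply hi1; simp [bil611_apply, h])
  have e3 : ∀ k, c3 * b k3 k = law611 (b i1) (b j1) k := by intro k; rw [h3]; simp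
  have z30 : b k3 0 = 0 := by simpa [law611_eq, hc3] using e3 0
  have z31 : b k3 1 = 0 := by simpa [law611_eq, hc3] using e3 1
  have z34 : b k3 4 = 0 := by simpa [law611_eq, hc3] using e3 4
  have z32 : b k3 2 ≠ 0 := by
    intro h; apply hi1; simp [bil611_apply, ← e3, h]
  -- step B
  obtain ⟨m, hm⟩ := exists_basis_ne b ((LinearMap.proj 3).comp (bil611.flip (b k3)))
    (Pi.single 0 1) (by simpa [bil611_apply, law611_eq] using z32)
  obtain ⟨k4, c4, hc4, h4⟩ := mul m k3 (by
    intro h; apply hm; simp [bil611_apply, h])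
  have e4 : ∀ k, c4 * b k4 k = law611 (b m) (b k3) k := by intro k; rw [h4]; simp
  have z40 : b k4 0 = 0 := by simpa [law611_eq, hc4] using e4 0
  have z41 : b k4 1 = 0 := by simpa [law611_eq, hc4] using e4 1
  have z44 : b k4 4 = 0 := by simpa [law611_eq, hc4] using e4 4
  have z42 : b k4 2 = 0 := by simpa [law611_eq, hc4, z30, z31] using e4 2
  have z43 : b k4 3 ≠ 0 := by
    intro h; apply hm; simp [bil611_apply, ← e4, h]
  obtain ⟨n, hn⟩ := exists_basis_ne b ((LinearMap.proj 5).comp (bil611.flip (b k4)))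
    (Pi.single 0 1) (by simpa [bil611_apply, law611_eq] using z43)
  obtain ⟨k6, c6, hc6, h6⟩ := mul n k4 (by
    intro h; apply hn; simp [bil611_apply, h])
  have e6 : ∀ k, c6 * b k6 k = law611 (b n) (b k4) k := by intro k; rw [h6]; simp
  have z60 : b k6 0 = 0 := by simpa [law611_eq, hc6] using e6 0
  have z61 : b k6 1 = 0 := by simpa [law611_eq, hc6] using e6 1
  have z62 : b k6 2 = 0 := by simpa [law611_eq, hc6, z40, z41] using e6 2
  have z63 : b k6 3 = 0 := by simpa [law611_eq, hc6, z40, z42] using e6 3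
  have z64 : b k6 4 = 0 := by simpa [law611_eq, hc6] using e6 4
  have z65 : b k6 5 ≠ 0 := by
    intro h; apply hn; simp [bil611_apply, ← e6, h]
  -- vectors on the last axis are multiples of `b k6`
  have ax : ∀ v : Fin 6 → ℝ, v 0 = 0 → v 1 = 0 → v 2 = 0 → v 3 = 0 → v 4 = 0 →
      v = (v 5 / b k6 5) • b k6 := by
    intro v h0 h1 h2 h3 h4
    ext k
    fin_cases k <;> simp [h0, h1, h2, h3, h4, z60, z61, z62, z63, z64, z65]
  have axr : ∀ v : Fin 6 → ℝ, v 0 = 0 → v 1 = 0 → v 2 = 0 → v 3 = 0 → v 4 = 0 → v 5 ≠ 0 →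
      b.repr v k6 ≠ 0 := by
    intro v h0 h1 h2 h3 h4 h5
    rw [ax v h0 h1 h2 h3 h4]
    simp [h5, z65]
  -- step C
  obtain ⟨p, hp0, hp1⟩ : ∃ p, b p 0 = 0 ∧ b p 1 ≠ 0 := by
    by_contra! hc
    obtain ⟨q, hq⟩ := exists_basis_ne b (LinearMap.proj 0) (Pi.single 0 1) (by simp)
    simp only [LinearMap.proj_apply] at hq
    have uniq : ∀ r, b r 0 ≠ 0 → r = q := by
      intro r hr
      apply N2 k4 k6 r q <;> apply axr <;> simp [law611_eq, z40, z41, z42, z43, z44, hr, hq]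
    obtain ⟨r, hr⟩ := exists_basis_ne b
      (LinearMap.proj 1 - (b q 1 / b q 0) • LinearMap.proj 0) (Pi.single 1 1) (by simp)
    apply hr
    by_cases h0 : b r 0 = 0
    · simp [h0, hc r h0]
    · rw [uniq r h0]; simp [hq]
  -- step D
  obtain ⟨s, hs4, hs0, hs1, hs2⟩ : ∃ s, b s 4 ≠ 0 ∧ b s 0 = 0 ∧ b s 1 = 0 ∧ b s 2 = 0 := by
    set w : Fin 6 → ℝ := Pi.single 4 1 with hw
    have hsum := b.sum_repr w
    obtain ⟨s, -, hs⟩ : ∃ s ∈ Finset.univ, b.repr w s * b s 4 ≠ 0 := by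
      apply Finset.exists_ne_zero_of_sum_ne_zero
      have := congrFun hsum 4
      simp only [Finset.sum_apply, Pi.smul_apply, smul_eq_mul] at this
      rw [this]; simp [hw]
    have hcs : b.repr w s ≠ 0 := left_ne_zero_of_mul hs
    have key : ∀ j k, k ≠ k6 → b.repr (law611 (b s) (b j)) k = 0 := by
      intro j k hk
      by_contra hne
      have h1 : b.repr (law611 w (b j)) k = 0 := by
        rw [ax (law611 w (b j)) (by simp [law611_eq]) (by simp [law611_eq])
          (by simp [law611_eq, hw]) (by simp [law611_eq, hw]) (by simp [law611_eq])]
        simp [Finsupp.single_apply, hk.symm]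
      have h2 : law611 w (b j) = ∑ i, b.repr w i • law611 (b i) (b j) := by
        rw [← bil611_apply]
        conv_lhs => rw [← hsum]
        simp only [map_sum, map_smul, LinearMap.sum_apply, LinearMap.smul_apply, bil611_apply]
      rw [h2] at h1
      simp only [map_sum, map_smul, Finsupp.coe_finsetSum, Finset.sum_apply,
        Finsupp.smul_apply, smul_eq_mul] at h1
      rw [Finset.sum_eq_single s] at h1
      · exact (mul_ne_zero hcs hne) h1
      · intro i _ hi
        by_contra h
        apply hi
        apply N2 j k i s
        · rw [skew]; simpa using right_ne_zero_of_mul h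
        · rw [skew]; simpa using hne
      · simp
    have key2 : ∀ j, law611 (b s) (b j) =
        b.repr (law611 (b s) (b j)) k6 • b k6 := by
      intro j
      conv_lhs => rw [← b.sum_repr (law611 (b s) (b j))]
      apply Finset.sum_eq_single k6
      · intro l _ hl
        rw [key j l hl, zero_smul]
      · simp
    have key3 : ∀ t : Fin 6, b k6 t = 0 → ∀ y, law611 (b s) y t = 0 := by
      intro t ht y
      by_contra h
      obtain ⟨j, hj⟩ := exists_basis_ne b ((LinearMap.proj t).comp (bil611 (b s))) y h
      apply hj
      simp only [LinearMap.comp_apply, bil611_apply, LinearMap.proj_apply]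
      rw [key2]; simp [ht]
    refine ⟨s, right_ne_zero_of_mul hs, ?_, ?_, ?_⟩
    · simpa [law611_eq] using key3 2 z62 (Pi.single 1 1)
    · simpa [law611_eq] using key3 2 z62 (Pi.single 0 1)
    · simpa [law611_eq] using key3 3 z63 (Pi.single 0 1)
  -- conclusion
  have : k3 = s := by
    apply N2 p k6 k3 s <;> apply axr <;>
      simp [law611_eq, z30, z31, z32, z34, hs0, hs1, hs2, hs4, hp0, hp1]
  rw [← this] at hs2
  exact z32 hs2

/-- `L_{6,11}` admits no nice basis: for every basis, either some
bracket `[X_i,X_j]` involves more than one basis vector, or some basis vector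
`X_k` appears in brackets `[X_i,X_j]` for more than one `j` (for a fixed `i`). -/
theorem stmt_13 (b : Module.Basis (Fin 6) ℝ (Fin 6 → ℝ)) :
    (∃ i j : Fin 6,
      1 < (Finset.univ.filter fun k : Fin 6 =>
            b.repr (law611 (b i) (b j)) k ≠ 0).card) ∨
    (∃ i k : Fin 6,
      1 < (Finset.univ.filter fun j : Fin 6 =>
            b.repr (law611 (b i) (b j)) k ≠ 0).card) := by
  by_contra hcon
  push Not at hcon
  obtain ⟨h1, h2⟩ := hcon
  apply nice_false b
  · intro i j k l hk hl
    exact Finset.card_le_one.1 (h1 i j) k (by simpa using hk) l (by simpa using hl)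
  · intro i k j l hj hl
    exact Finset.card_le_one.1 (h2 i k) j (by simpa using hj) l (by simpa using hl)
end
end
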